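/- Let p be a prime number with p ≡ 2 (mod 3) and let j be a positive even integer not divisible by p. Then for all integers n ≥ 0 and t ≥ 0, B_3^{(12)}(6·p^{2t+2}·n + (p^{2t+1}·(4p + 3j) − 1)) ≡ 0 (mod 6). -/

import Mathlib

/-! Write `N` for the argument of `B 3 12`, so that `N + 1 = p^(2t+1) u` with `u` even and `p ∤ u`,
and let `R(q)` be the generating function of `3`-regular partitions; that of `B 3 12` is `R¹²`.

Modulo `2`, `R¹² = (R⁶)²` is a series in `q²`, while `N` is odd.

Modulo `3`, Glaisher's theorem gives `R = ∏ (1 + qⁱ + q²ⁱ) = f²` with `f = ∏ (1 - qⁱ)`, so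
`R¹² = (f⁸)³ = f⁸(q³)`. Only `N = 3k` matters, and then the coefficient of `q^k` in `f⁸` is needed.
Since `f⁹ = f(q³)³` modulo `3`, `f⁸ = f(q³)³ / f`, which is a theta series of the hexagonal lattice:
its exponents `E` are those for which `3E + 1 = x² + xy + y²` with `x ≡ -1`, `y ≡ 0` modulo `3`.
As `p` is inert in `ℤ[ω]` and divides `3k + 1 = N + 1` to an odd power, no such representation
exists (`not_norm`), and the coefficient vanishes.

The theta identity is used in a finite form (`coeff_qfac_eight`). Splitting the factors of
`∏_{i < 6M} (1 + qⁱz)` by the residue of `i` modulo `3` (`zprod_three`) and comparing the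
coefficients of `z^(3M)` by the `q`-binomial theorem (`coeff_zprod`) expresses the Gaussian binomial
`[6M, 3M]` in base `q` as a sum of products of three Gaussian binomials `[2M, ·]` in base `q³`.
Modulo `q^(k+1)` and for large `M` these are `1 / f(q)` and `1 / f(q³)`. -/

/-- `B ℓ r n` is the number of `ℓ`-regular `r`-multipartitions of `n`:
ordered `r`-tuples `(λ⁽¹⁾, …, λ⁽ʳ⁾)` of partitions, none of whose parts is
divisible by `ℓ`, whose sizes sum to `n`. -/
def B (ℓ r n : ℕ) : ℕ :=
  Fintype.card {f : Fin r → Σ a : Fin (n + 1), Nat.Partition a //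
    (∑ i, ((f i).1 : ℕ)) = n ∧ ∀ i, ∀ part ∈ (f i).2.parts, ¬ ℓ ∣ part}

open PowerSeries PowerSeries.WithPiTopology Finset

/-! ### Generating functions -/

/-- The generating function of `3`-regular partitions, with coefficients in `R`. -/
noncomputable def regGF (R : Type*) [CommRing R] : PowerSeries R :=
  PowerSeries.mk fun n => ((Nat.Partition.restricted n (¬ 3 ∣ ·)).card : R)

theorem coeff_pow_congr {R : Type*} [CommRing R] {f g : PowerSeries R} {n : ℕ}
    (h : (X : PowerSeries R) ^ (n + 1) ∣ f - g) (r : ℕ) : coeff n (f ^ r) = coeff n (g ^ r) := by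
  have h2 := X_pow_dvd_iff.1 (h.trans (sub_dvd_pow_sub_pow f g r)) n (Nat.lt_succ_self n)
  rwa [map_sub, sub_eq_zero] at h2

/-- The generating function of `B 3 r` is the `r`-th power of that of `3`-regular partitions. -/
theorem B_eq_coeff (R : Type*) [CommRing R] (r n : ℕ) :
    (B 3 r n : R) = coeff n (regGF R ^ r) := by
  classical
  -- The truncation of the generating function at degree `n`, as a sum over all partitions.
  let w : (Σ a : Fin (n + 1), Nat.Partition a) → PowerSeries R := fun s =>
    if ∀ part ∈ s.2.parts, ¬ 3 ∣ part then X ^ (s.1 : ℕ) else 0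
  have hw : (X : PowerSeries R) ^ (n + 1) ∣ regGF R - ∑ s, w s := by
    rw [X_pow_dvd_iff]
    intro m hm
    rw [map_sub, sub_eq_zero, map_sum, Fintype.sum_sigma, Finset.sum_eq_single ⟨m, hm⟩]
    · simp [regGF, w, Nat.Partition.restricted, apply_ite (coeff m), coeff_X_pow]
    · intro b _ hb
      refine Finset.sum_eq_zero fun y _ => ?_
      have : m ≠ b := fun h => hb (Fin.ext h.symm)
      simp [w, apply_ite (coeff m), coeff_X_pow, this]
    · simp
  rw [coeff_pow_congr hw, Fintype.sum_pow, map_sum, B, Fintype.card_subtype, Finset.card_filter,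
    Nat.cast_sum]
  refine Finset.sum_congr rfl fun f _ => ?_
  by_cases h : ∀ i, ∀ part ∈ (f i).2.parts, ¬ 3 ∣ part
  · have : ∏ i, w (f i) = X ^ (∑ i, ((f i).1 : ℕ)) := by
      rw [← Finset.prod_pow_eq_pow_sum]
      exact Finset.prod_congr rfl fun i _ => if_pos (h i)
    rw [this, coeff_X_pow]
    simp only [and_iff_left h, eq_comm (a := n)]
    simp
  · have h' := h
    push Not at h'
    obtain ⟨i, part, h1, h2⟩ := h'
    have : ∏ i, w (f i) = 0 :=
      Finset.prod_eq_zero (Finset.mem_univ i) (if_neg fun h => h part h1 h2)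
    rw [this, if_neg fun hh => h hh.2]
    simp

/-- Over `ℤ/ℓ`, the `ℓ`-th power of a series `f(q)` is `f(q^ℓ)`. -/
theorem coeff_pow_prime (l : ℕ) [Fact l.Prime] (f : PowerSeries (ZMod l)) (n : ℕ) :
    coeff n (f ^ l) = if l ∣ n then coeff (n / l) f else 0 := by
  have hl : l ≠ 0 := (Fact.out : l.Prime).ne_zero
  have h : f ^ l = f.expand l hl := by
    have h1 : MvPowerSeries.map (frobenius (ZMod l) l) (MvPowerSeries.expand l hl f) = f ^ l :=
      MvPowerSeries.map_frobenius_expand l hl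
    rw [← h1, ZMod.frobenius_zmod, MvPowerSeries.map_id]
    rfl
  rw [h, coeff_expand]

/-! ### The `q`-binomial theorem -/

/-- The finite `q`-Pochhammer product `(Q; Q)_n = (1 - Q)(1 - Q²)⋯(1 - Qⁿ)`. -/
def qfac {A : Type*} [CommRing A] (Q : A) (n : ℕ) : A := ∏ i ∈ range n, (1 - Q ^ (i + 1))

/-- The product `(1 + cz)(1 + cQz)⋯(1 + cQⁿ⁻¹z)` as a polynomial in `z`. -/
noncomputable def zprod {A : Type*} [CommRing A] (Q c : A) (n : ℕ) : Polynomial A :=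
  ∏ i ∈ range n, (1 + Polynomial.C (c * Q ^ i) * Polynomial.X)

theorem qfac_succ {A : Type*} [CommRing A] (Q : A) (n : ℕ) :
    qfac Q (n + 1) = qfac Q n * (1 - Q ^ (n + 1)) := prod_range_succ _ _

theorem coeff_zprod_zero {A : Type*} [CommRing A] (Q c : A) (n : ℕ) :
    (zprod Q c n).coeff 0 = 1 := by
  simp [zprod, Polynomial.coeff_zero_eq_eval_zero, Polynomial.eval_prod]

theorem coeff_zprod_succ {A : Type*} [CommRing A] (Q c : A) (n j : ℕ) :
    (zprod Q c (n + 1)).coeff (j + 1) =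
      (zprod Q c n).coeff (j + 1) + c * Q ^ n * (zprod Q c n).coeff j := by
  have : zprod Q c (n + 1) = zprod Q c n +
      Polynomial.C (c * Q ^ n) * (zprod Q c n * Polynomial.X) := by
    rw [zprod, prod_range_succ, ← zprod]; ring
  rw [this, Polynomial.coeff_add, Polynomial.coeff_C_mul, Polynomial.coeff_mul_X]

theorem coeff_zprod_of_lt {A : Type*} [CommRing A] (Q c : A) (n j : ℕ) (h : n < j) :
    (zprod Q c n).coeff j = 0 := by
  induction n generalizing j with
  | zero => simp [zprod, Polynomial.coeff_one]; omega
  | succ n ih =>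
    obtain ⟨j, rfl⟩ : ∃ i, j = i + 1 := ⟨j - 1, by omega⟩
    rw [coeff_zprod_succ, ih _ (by omega), ih _ (by omega)]; simp

/-- The `q`-binomial theorem with denominators cleared. -/
theorem coeff_zprod {A : Type*} [CommRing A] (Q c : A) (n j m : ℕ) (h : j + m = n) :
    (zprod Q c n).coeff j * qfac Q j * qfac Q m = c ^ j * Q ^ (j.choose 2) * qfac Q n := by
  induction n generalizing j m with
  | zero =>
    obtain ⟨rfl, rfl⟩ : j = 0 ∧ m = 0 := by omega
    simp [coeff_zprod_zero, qfac]
  | succ n ih =>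
    rcases j with _ | j
    · obtain rfl : m = n + 1 := by omega
      simp [coeff_zprod_zero, qfac]
    · have h1 := ih j m (by omega)
      have hc : (j + 1).choose 2 = j + j.choose 2 := by
        rw [Nat.choose_succ_succ']; simp
      rw [coeff_zprod_succ, hc]
      rcases m with _ | m
      · obtain rfl : j = n := by omega
        rw [coeff_zprod_of_lt _ _ _ _ (Nat.lt_succ_self _), qfac_succ]
        rw [pow_succ, pow_add]
        linear_combination c * Q ^ j * (1 - Q ^ (j + 1)) * h1
      · have h2 := ih (j + 1) m (by omega)
        obtain rfl : n = j + m + 1 := by omega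
        rw [hc] at h2
        rw [qfac_succ Q (j + m + 1)]
        rw [qfac_succ Q m] at h1 ⊢
        rw [qfac_succ Q j] at h2 ⊢
        linear_combination (1 - Q ^ (m + 1)) * h2 +
          c * Q ^ (j + m + 1) * (1 - Q ^ (j + 1)) * h1

theorem prod_range_three_mul {A : Type*} [CommMonoid A] (F : ℕ → A) (n : ℕ) :
    ∏ i ∈ range (3 * n), F i =
      (∏ i ∈ range n, F (3 * i)) * (∏ i ∈ range n, F (3 * i + 1)) *
        ∏ i ∈ range n, F (3 * i + 2) := by
  rw [← prod_mul_distrib, ← prod_mul_distrib]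
  induction n with
  | zero => simp
  | succ n ih =>
    rw [Nat.mul_succ, prod_range_succ, prod_range_succ, prod_range_succ, ih, prod_range_succ]
    simp only [mul_assoc]

/-- Splitting the factors `1 + Qⁱz` according to the residue of `i` modulo `3`. -/
theorem zprod_three {A : Type*} [CommRing A] (Q : A) (n : ℕ) :
    zprod Q 1 (3 * n) = zprod (Q ^ 3) 1 n * zprod (Q ^ 3) Q n * zprod (Q ^ 3) (Q ^ 2) n := by
  rw [zprod, prod_range_three_mul]
  simp only [zprod]
  have h0 : ∀ i, (1 : A) * Q ^ (3 * i) = 1 * (Q ^ 3) ^ i := fun i => by ring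
  have h1 : ∀ i, (1 : A) * Q ^ (3 * i + 1) = Q * (Q ^ 3) ^ i := fun i => by ring
  have h2 : ∀ i, (1 : A) * Q ^ (3 * i + 2) = Q ^ 2 * (Q ^ 3) ^ i := fun i => by ring
  simp only [h0, h1, h2]

/-! ### The norm form `x² + xy + y²` -/

/-- Primes `p ≡ 2 (mod 3)` are inert in `ℤ[ω]`. -/
theorem dvd_of_dvd_norm {p : ℕ} (hp : p.Prime) (hpm : p % 3 = 2) {x y : ℤ}
    (h : (p : ℤ) ∣ x ^ 2 + x * y + y ^ 2) : (p : ℤ) ∣ x ∧ (p : ℤ) ∣ y := by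
  have := Fact.mk hp
  have h0 : (x : ZMod p) ^ 2 + x * y + (y : ZMod p) ^ 2 = 0 := by
    have := (ZMod.intCast_zmod_eq_zero_iff_dvd _ p).2 h
    push_cast at this
    exact this
  rw [← ZMod.intCast_zmod_eq_zero_iff_dvd, ← ZMod.intCast_zmod_eq_zero_iff_dvd]
  generalize (x : ZMod p) = x at h0
  generalize (y : ZMod p) = y at h0
  by_cases hx : x = 0
  · subst hx; simpa using h0
  by_cases hy : y = 0
  · subst hy; simpa using h0
  exfalso
  have h3 : x ^ 3 = y ^ 3 := by linear_combination (x - y) * h0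
  -- Cubing is injective on the units because `p - 1 = 3 s + 1`.
  obtain ⟨s, hs⟩ : ∃ s, p - 1 = 3 * s + 1 := ⟨p / 3, by omega⟩
  have hx1 := ZMod.pow_card_sub_one_eq_one hx
  have hy1 := ZMod.pow_card_sub_one_eq_one hy
  rw [hs, pow_succ, pow_mul] at hx1 hy1
  rw [h3, ← hy1] at hx1
  have hxy : x = y := mul_left_cancel₀ (pow_ne_zero _ (pow_ne_zero _ hy)) hx1
  subst hxy
  have h4 : (3 : ZMod p) * x ^ 2 = 0 := by linear_combination h0
  rcases mul_eq_zero.1 h4 with h5 | h5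
  · have h6 : ((3 : ℕ) : ZMod p) = 0 := by exact_mod_cast h5
    rw [ZMod.natCast_eq_zero_iff] at h6
    have := (Nat.prime_dvd_prime_iff_eq hp Nat.prime_three).1 h6
    omega
  · exact hx (pow_eq_zero_iff (by norm_num) |>.1 h5)

/-- A number in which the inert prime `p` occurs to an odd power is not a value of the norm form. -/
theorem not_norm {p : ℕ} (hp : p.Prime) (hpm : p % 3 = 2) (u : ℤ) (hu : ¬ (p : ℤ) ∣ u) (t : ℕ)
    (x y : ℤ) : x ^ 2 + x * y + y ^ 2 ≠ (p : ℤ) ^ (2 * t + 1) * u := by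
  have hp0 : (p : ℤ) ≠ 0 := by exact_mod_cast hp.ne_zero
  induction t generalizing x y with
  | zero =>
    intro h
    obtain ⟨⟨a, rfl⟩, ⟨b, rfl⟩⟩ := dvd_of_dvd_norm (x := x) (y := y) hp hpm ⟨u, by rw [h]; ring⟩
    refine hu ⟨a ^ 2 + a * b + b ^ 2, mul_left_cancel₀ hp0 ?_⟩
    linear_combination -h
  | succ t ih =>
    intro h
    obtain ⟨⟨a, rfl⟩, ⟨b, rfl⟩⟩ := dvd_of_dvd_norm (x := x) (y := y) hp hpm
      ⟨(p : ℤ) ^ (2 * t + 2) * u, by rw [h]; ring⟩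
    refine ih a b (mul_left_cancel₀ (pow_ne_zero 2 hp0) ?_)
    linear_combination h

/-! ### The eighth power of Euler's product modulo `3` -/

theorem three_eq_zero : (3 : PowerSeries (ZMod 3)) = 0 := by
  have h : (3 : ZMod 3) = 0 := rfl
  have h2 := congrArg (C : ZMod 3 → PowerSeries (ZMod 3)) h
  rwa [map_zero, map_ofNat] at h2

theorem qfac_cube (n : ℕ) :
    qfac ((X : PowerSeries (ZMod 3)) ^ 3) n = qfac X n ^ 3 := by
  rw [qfac, qfac, ← prod_pow]
  refine prod_congr rfl fun i _ => ?_
  linear_combination (X ^ (i + 1) - X ^ (2 * (i + 1))) * three_eq_zero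

theorem X_pow_dvd_qfac_sub (k m : ℕ) (h : k ≤ m) :
    (X : PowerSeries (ZMod 3)) ^ (k + 1) ∣ qfac X m - qfac X k := by
  induction m, h using Nat.le_induction with
  | base => simp
  | succ m h ih =>
    rw [qfac_succ]
    have : qfac (X : PowerSeries (ZMod 3)) m * (1 - X ^ (m + 1)) - qfac X k =
      (qfac X m - qfac X k) - X ^ (m + 1) * qfac X m := by ring
    rw [this]
    exact dvd_sub ih (dvd_mul_of_dvd_left (pow_dvd_pow _ (by omega)) _)

/-- Glaisher's identity together with `1 + x + x² = (1 - x)²` in characteristic `3`. -/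
theorem regGF_congr (k : ℕ) :
    (X : PowerSeries (ZMod 3)) ^ (k + 1) ∣ regGF (ZMod 3) - qfac X k ^ 2 := by
  let _ : TopologicalSpace (ZMod 3) := ⊥
  have _ : DiscreteTopology (ZMod 3) := ⟨rfl⟩
  have h1 := Nat.Partition.hasProd_powerSeriesMk_card_countRestricted (ZMod 3) (m := 3) (by norm_num)
  rw [← Nat.Partition.powerSeriesMk_card_restricted_eq_powerSeriesMk_card_countRestricted
    (ZMod 3) (by norm_num)] at h1
  have h2 := h1.tendsto_prod_nat
  have h3 : ∀ n, ∏ i ∈ range n, ∑ j ∈ range 3, (X : PowerSeries (ZMod 3)) ^ ((i + 1) * j) =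
      qfac X n ^ 2 := by
    intro n
    rw [qfac, ← prod_pow]
    refine prod_congr rfl fun i _ => ?_
    simp only [sum_range_succ, range_zero, sum_empty]
    linear_combination X ^ (i + 1) * three_eq_zero
  simp only [h3] at h2
  rw [WithPiTopology.tendsto_iff_coeff_tendsto] at h2
  rw [X_pow_dvd_iff]
  intro m hm
  rw [map_sub, sub_eq_zero]
  refine tendsto_nhds_unique (h2 m) (tendsto_const_nhds.congr' ?_)
  filter_upwards [Filter.eventually_ge_atTop k] with n hn
  have h4 := X_pow_dvd_iff.1 ((X_pow_dvd_qfac_sub k n hn).trans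
    (sub_dvd_pow_sub_pow _ _ 2)) m hm
  rw [map_sub, sub_eq_zero] at h4
  exact h4.symm

theorem isUnit_qfac (n : ℕ) : IsUnit (qfac (X : PowerSeries (ZMod 3)) n) := by
  rw [isUnit_iff_constantCoeff]
  simp [qfac, map_prod]

/-- The `q`-binomial theorem, with the Gaussian binomial coefficient `h` in place of a quotient. -/
theorem exists_gauss {A : Type*} [CommRing A] (Q c : A) (hQ : ∀ n, IsUnit (qfac Q n))
    (n j m : ℕ) (hjm : j + m = n) :
    ∃ h, (zprod Q c n).coeff j = c ^ j * Q ^ (j.choose 2) * h ∧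
      h * qfac Q j * qfac Q m = qfac Q n := by
  obtain ⟨v, hv⟩ := (hQ j).exists_right_inv
  obtain ⟨w, hw⟩ := (hQ m).exists_right_inv
  have h := coeff_zprod Q c n j m hjm
  refine ⟨qfac Q n * v * w, ?_, ?_⟩
  · calc _ = (zprod Q c n).coeff j * (qfac Q j * v) * (qfac Q m * w) := by rw [hv, hw]; ring
      _ = ((zprod Q c n).coeff j * qfac Q j * qfac Q m) * v * w := by ring
      _ = _ := by rw [h]; ring
  · calc _ = qfac Q n * (qfac Q j * v) * (qfac Q m * w) := by ring
      _ = _ := by rw [hv, hw]; ring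

theorem two_mul_choose_two (a : ℕ) : 2 * (a.choose 2 : ℤ) = a * (a - 1) := by
  induction a with
  | zero => simp
  | succ a ih =>
    rw [Nat.choose_succ_succ']
    push_cast
    rw [Nat.choose_one_right]
    linear_combination ih

/-- With `x = a - M` and `y = b - M`, the exponent attached to `(a, b, c)` exceeds the minimal one
by `E` where `3E + 1` is the value of the norm form at `(3x - 1, 3y)`. -/
theorem exponent_eq (M a b c : ℕ) (h : a + b + c = 3 * M) :
    3 * (((3 * a.choose 2 + (b + 3 * b.choose 2) + (2 * c + 3 * c.choose 2) : ℕ) : ℤ)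
      - ((3 * M).choose 2 : ℕ)) + 1 =
    (3 * (a - M : ℤ) - 1) ^ 2 + (3 * (a - M : ℤ) - 1) * (3 * (b - M)) + (3 * (b - M : ℤ)) ^ 2 := by
  have ha := two_mul_choose_two a
  have hb := two_mul_choose_two b
  have hc := two_mul_choose_two c
  have hM := two_mul_choose_two (3 * M)
  have h' : (c : ℤ) = 3 * M - a - b := by zify at h; linarith
  refine mul_left_cancel₀ (two_ne_zero) ?_
  push_cast at hM ⊢
  rw [h'] at hc ⊢
  linear_combination 9 * ha + 9 * hb + 9 * hc - 3 * hM

theorem bound_of_norm (k X Y : ℤ) (hk : 0 ≤ k) (h : X ^ 2 + X * Y + Y ^ 2 ≤ 3 * k + 1) :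
    |X| ≤ 2 * k + 2 ∧ |Y| ≤ 2 * k + 2 ∧ |X + Y| ≤ 2 * k + 2 := by
  have h1 : X ^ 2 ≤ (2 * k + 2) ^ 2 := by nlinarith [sq_nonneg (X + 2 * Y)]
  have h2 : Y ^ 2 ≤ (2 * k + 2) ^ 2 := by nlinarith [sq_nonneg (2 * X + Y)]
  have h3 : (X + Y) ^ 2 ≤ (2 * k + 2) ^ 2 := by nlinarith [sq_nonneg (X - Y)]
  exact ⟨abs_le_of_sq_le_sq h1 (by omega), abs_le_of_sq_le_sq h2 (by omega),
    abs_le_of_sq_le_sq h3 (by omega)⟩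

/-- Modulo `3`, the series `∏ (1 - qⁱ)⁸` has a nonzero coefficient at `q^k` only if `3k + 1` is of
the form `x² + xy + y²`. -/
theorem coeff_qfac_eight (k : ℕ) (hk : ∀ x y : ℤ, x ^ 2 + x * y + y ^ 2 ≠ 3 * k + 1) :
    coeff k (qfac (X : PowerSeries (ZMod 3)) k ^ 8) = 0 := by
  set φ := qfac (X : PowerSeries (ZMod 3)) k with hφ
  let π := Ideal.Quotient.mk (Ideal.span {(X : PowerSeries (ZMod 3)) ^ (k + 1)})
  have hπ : ∀ m, k ≤ m → π (qfac X m) = π φ := fun m hm =>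
    Ideal.Quotient.eq.2 (Ideal.mem_span_singleton.2 (X_pow_dvd_qfac_sub k m hm))
  have hcoeff : ∀ f g, π f = π g → ∀ m ≤ k, coeff m f = coeff m g := by
    intro f g hfg m hm
    have := X_pow_dvd_iff.1 (Ideal.mem_span_singleton.1 (Ideal.Quotient.eq.1 hfg)) m (by omega)
    rwa [map_sub, sub_eq_zero] at this
  have hu : IsUnit (π φ) := (isUnit_qfac k).map π
  have hQ3 : ∀ n, IsUnit (qfac ((X : PowerSeries (ZMod 3)) ^ 3) n) := fun n => by
    rw [qfac_cube]; exact (isUnit_qfac n).pow 3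
  -- Large enough that every Gaussian binomial that matters has stabilised modulo `q^(k+1)`.
  obtain ⟨M, hM⟩ : ∃ M, M = 2 * k + 5 := ⟨_, rfl⟩
  obtain ⟨g, hg1, hg2⟩ := exists_gauss (X : PowerSeries (ZMod 3)) 1 isUnit_qfac
    (3 * (2 * M)) (3 * M) (3 * M) (by ring)
  have hg : π g * π φ = 1 := by
    have h := congrArg π hg2
    rw [map_mul, map_mul, hπ (3 * M) (by omega), hπ (3 * (2 * M)) (by omega)] at h
    exact hu.mul_right_cancel (by rw [h, one_mul])
  have hcentral : coeff ((3 * M).choose 2 + k) (φ ^ 9 * (zprod X 1 (3 * (2 * M))).coeff (3 * M)) =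
      coeff k (φ ^ 8) := by
    have : φ ^ 9 * (zprod X 1 (3 * (2 * M))).coeff (3 * M) =
        X ^ ((3 * M).choose 2) * (φ ^ 9 * g) := by rw [hg1, one_pow]; ring
    rw [this, add_comm, coeff_X_pow_mul]
    refine hcoeff _ _ ?_ k le_rfl
    simp only [map_mul, map_pow]
    linear_combination (π φ) ^ 8 * hg
  have hterm : ∀ a b c : ℕ, a + b + c = 3 * M →
      coeff ((3 * M).choose 2 + k) (φ ^ 9 * ((zprod (X ^ 3) 1 (2 * M)).coeff a *
        (zprod (X ^ 3) X (2 * M)).coeff b * (zprod (X ^ 3) (X ^ 2) (2 * M)).coeff c)) = 0 := by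
    intro a b c habc
    by_cases ha : 2 * M < a
    · simp [coeff_zprod_of_lt _ _ _ _ ha]
    by_cases hb : 2 * M < b
    · simp [coeff_zprod_of_lt _ _ _ _ hb]
    by_cases hc : 2 * M < c
    · simp [coeff_zprod_of_lt _ _ _ _ hc]
    obtain ⟨ga, ha1, ha2⟩ := exists_gauss ((X : PowerSeries (ZMod 3)) ^ 3) 1 hQ3
      (2 * M) a (2 * M - a) (by omega)
    obtain ⟨gb, hb1, hb2⟩ := exists_gauss ((X : PowerSeries (ZMod 3)) ^ 3) X hQ3
      (2 * M) b (2 * M - b) (by omega)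
    obtain ⟨gc, hc1, hc2⟩ := exists_gauss ((X : PowerSeries (ZMod 3)) ^ 3) (X ^ 2) hQ3
      (2 * M) c (2 * M - c) (by omega)
    obtain ⟨T, hT⟩ : ∃ T, T = 3 * a.choose 2 + (b + 3 * b.choose 2) + (2 * c + 3 * c.choose 2) :=
      ⟨_, rfl⟩
    have hE := exponent_eq M a b c habc
    rw [← hT] at hE
    have hprod : φ ^ 9 * ((zprod (X ^ 3) 1 (2 * M)).coeff a *
        (zprod (X ^ 3) X (2 * M)).coeff b * (zprod (X ^ 3) (X ^ 2) (2 * M)).coeff c) =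
        X ^ T * (φ ^ 9 * (ga * gb * gc)) := by
      rw [ha1, hb1, hc1, one_pow, hT]
      ring
    rw [hprod, coeff_X_pow_mul']
    split_ifs with hle
    swap
    · rfl
    have hne := hk (3 * (a - M : ℤ) - 1) (3 * (b - M))
    rw [← hE] at hne
    have hb' := bound_of_norm k (3 * (a - M : ℤ) - 1) (3 * (b - M)) (by positivity)
      (by rw [← hE]; zify at hle; linarith)
    have hpos : (0 : ℤ) ≤ 3 * ((T : ℤ) - ((3 * M).choose 2 : ℕ)) + 1 := by
      rw [hE]
      nlinarith [sq_nonneg ((3 * (a - M : ℤ) - 1) + 2 * (3 * (b - M))),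
        sq_nonneg (3 * (a - M : ℤ) - 1)]
    obtain ⟨h1, h2, h3⟩ := hb'
    rw [abs_le] at h1 h2 h3
    have hstab : ∀ i h', k ≤ i → k ≤ 2 * M - i →
        h' * qfac ((X : PowerSeries (ZMod 3)) ^ 3) i * qfac (X ^ 3) (2 * M - i) =
          qfac (X ^ 3) (2 * M) → π h' * π φ ^ 3 = 1 := by
      intro i h' hi hi' h
      rw [qfac_cube, qfac_cube, qfac_cube] at h
      have h := congrArg π h
      rw [map_mul, map_mul, map_pow, map_pow, map_pow, hπ i hi, hπ (2 * M - i) hi',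
        hπ (2 * M) (by omega)] at h
      exact (hu.pow 3).mul_right_cancel (by rw [h, one_mul])
    have hone : π (φ ^ 9 * (ga * gb * gc)) = π 1 := by
      have e1 := hstab a ga (by omega) (by omega) ha2
      have e2 := hstab b gb (by omega) (by omega) hb2
      have e3 := hstab c gc (by omega) (by omega) hc2
      calc π (φ ^ 9 * (ga * gb * gc)) =
          (π ga * π φ ^ 3) * (π gb * π φ ^ 3) * (π gc * π φ ^ 3) := by
            simp only [map_mul, map_pow]; ring
        _ = π 1 := by rw [e1, e2, e3]; simp
    rw [hcoeff _ _ hone _ (by omega), coeff_one, if_neg (by omega)]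
  rw [← hcentral, zprod_three, Polynomial.coeff_mul, Finset.mul_sum, map_sum]
  refine Finset.sum_eq_zero fun x hx => ?_
  rw [Polynomial.coeff_mul, Finset.sum_mul, Finset.mul_sum, map_sum]
  refine Finset.sum_eq_zero fun y hy => ?_
  rw [HasAntidiagonal.mem_antidiagonal] at hx hy
  exact hterm _ _ _ (by omega)

theorem stmt_7 (p : ℕ) (hp : Nat.Prime p) (hpm : p % 3 = 2)
    (j : ℕ) (hj : 0 < j) (hje : Even j) (hjd : ¬ p ∣ j) (n t : ℕ) :
    B 3 12 (6 * p ^ (2 * t + 2) * n + (p ^ (2 * t + 1) * (4 * p + 3 * j) - 1)) ≡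
      0 [MOD 6] := by
  obtain ⟨N, hN⟩ : ∃ N, N = 6 * p ^ (2 * t + 2) * n + (p ^ (2 * t + 1) * (4 * p + 3 * j) - 1) :=
    ⟨_, rfl⟩
  have hpos : 0 < p ^ (2 * t + 1) * (4 * p + 3 * j) := by
    have := hp.pos
    positivity
  have hN1 : N + 1 = p ^ (2 * t + 1) * (6 * p * n + 4 * p + 3 * j) := by
    have : N + 1 = 6 * p ^ (2 * t + 2) * n + p ^ (2 * t + 1) * (4 * p + 3 * j) := by omega
    rw [this]; ring
  rw [← hN, Nat.modEq_zero_iff_dvd]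
  refine Nat.Coprime.mul_dvd_of_dvd_of_dvd (m := 2) (n := 3) (by norm_num) ?_ ?_
  · -- The generating function is a square modulo `2`, and `N` is odd.
    rw [← CharP.cast_eq_zero_iff (ZMod 2) 2, B_eq_coeff, show (12 : ℕ) = 6 * 2 from rfl, pow_mul,
      coeff_pow_prime, if_neg]
    have h2 : 2 ∣ N + 1 := by
      rw [hN1]
      obtain ⟨i, rfl⟩ := hje
      exact dvd_mul_of_dvd_right ⟨3 * p * n + 2 * p + 3 * i, by ring⟩ _
    omega
  · rw [← CharP.cast_eq_zero_iff (ZMod 3) 3, B_eq_coeff, show (12 : ℕ) = 4 * 3 from rfl, pow_mul,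
      coeff_pow_prime]
    split_ifs with h3
    swap
    · rfl
    obtain ⟨k, rfl⟩ := h3
    rw [Nat.mul_div_cancel_left _ (by norm_num), coeff_pow_congr (regGF_congr k), ← pow_mul]
    refine coeff_qfac_eight k fun x y h => ?_
    refine not_norm hp hpm (6 * p * n + 4 * p + 3 * j) ?_ t x y ?_
    · intro hd
      have hd' : p ∣ 6 * p * n + 4 * p + 3 * j := by exact_mod_cast hd
      have h3j : p ∣ 3 * j :=
        (Nat.dvd_add_right (⟨6 * n + 4, by ring⟩ : p ∣ 6 * p * n + 4 * p)).1 hd'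
      rcases hp.dvd_mul.1 h3j with h | h
      · have := (Nat.prime_dvd_prime_iff_eq hp Nat.prime_three).1 h
        omega
      · exact hjd h
    · rw [h]
      exact_mod_cast hN1
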